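/- arXiv:2508.07400 — 6 statements merged into one kernel-verified Lean document; each statement's English description precedes it below -/
import Mathlib

section
/- Let π be a positive policy, and let ν : {0,…,H} × S → ℝ satisfy ν_H(s) = 0 for all s ∈ S. Define the time-varying reward r by r_t(s,a) = log π_t(a|s) − γ · Σ_{s'∈S} T(s'|s,a) ν_{t+1}(s') + ν_t(s) for all t ∈ {0,…,H−1}, s ∈ S, a ∈ A. Then the soft Q-functions of r satisfy Q_t(s,a) = log π_t(a|s) + ν_t(s) for all t, s, a; consequently the soft value functions satisfy V_t(s) = ν_t(s) for all 0 ≤ t ≤ H−1 and all s, and the soft-optimal policy of r equals π (i.e., r induces π with soft value functions ν). -/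
/-- Soft Q-function computed backward in time, indexed by the number of steps
remaining before the final time `H - 1`: `Qaux T γ H r k` is the soft
Q-function at time `t = H - 1 - k`. -/
noncomputable def Qaux {S A : Type*} [Fintype S] [Fintype A]
    (T : S → A → S → ℝ) (γ : ℝ) (H : ℕ) (r : ℕ → S → A → ℝ) : ℕ → S → A → ℝ
  | 0 => fun s a => r (H - 1) s a
  | (k + 1) => fun s a => r (H - 1 - (k + 1)) s a +
      γ * ∑ s' : S, T s a s' *
        Real.log (∑ a' : A, Real.exp (Qaux T γ H r k s' a'))

/-- The soft Q-function at time `t` (meaningful for `t ≤ H - 1`). -/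
noncomputable def softQ {S A : Type*} [Fintype S] [Fintype A]
    (T : S → A → S → ℝ) (γ : ℝ) (H : ℕ) (r : ℕ → S → A → ℝ)
    (t : ℕ) : S → A → ℝ :=
  Qaux T γ H r (H - 1 - t)

/-- The soft value function `V_t(s) = log Σ_a exp Q_t(s,a)`. -/
noncomputable def softV {S A : Type*} [Fintype S] [Fintype A]
    (T : S → A → S → ℝ) (γ : ℝ) (H : ℕ) (r : ℕ → S → A → ℝ)
    (t : ℕ) (s : S) : ℝ :=
  Real.log (∑ a : A, Real.exp (softQ T γ H r t s a))

/-- The soft-optimal (maximum-entropy) policy of the reward `r`. -/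
noncomputable def softPolicy {S A : Type*} [Fintype S] [Fintype A]
    (T : S → A → S → ℝ) (γ : ℝ) (H : ℕ) (r : ℕ → S → A → ℝ)
    (t : ℕ) (s : S) (a : A) : ℝ :=
  Real.exp (softQ T γ H r t s a) / ∑ a' : A, Real.exp (softQ T γ H r t s a')

/-- Shifting the log-probabilities of a positive distribution by `c` gives
unnormalized weights of total mass `exp c`. -/
theorem sum_exp_log_add {A : Type*} [Fintype A] {p : A → ℝ}
    (hpos : ∀ a, 0 < p a) (hsum : ∑ a, p a = 1) (c : ℝ) :
    ∑ a, Real.exp (Real.log (p a) + c) = Real.exp c := by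
  simp only [Real.exp_add, Real.exp_log (hpos _), ← Finset.sum_mul, hsum, one_mul]

/-- if `r_t(s,a) = log π_t(a|s) − γ Σ_{s'} T(s'|s,a) ν_{t+1}(s') + ν_t(s)`
with `ν_H ≡ 0`, then the soft Q-functions of `r` satisfy
`Q_t(s,a) = log π_t(a|s) + ν_t(s)`, the soft value functions satisfy `V_t = ν_t`,
and the soft-optimal policy of `r` equals `π`. -/
theorem stmt0 {S A : Type*} [Fintype S] [Fintype A] [Nonempty S] [Nonempty A]
    (T : S → A → S → ℝ) (γ : ℝ) (H : ℕ)
    (hT : ∀ s a s', 0 ≤ T s a s') (hTsum : ∀ s a, ∑ s' : S, T s a s' = 1)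
    (hγ0 : 0 ≤ γ) (hγ1 : γ ≤ 1) (hH : 1 ≤ H)
    (π : ℕ → S → A → ℝ)
    (hπpos : ∀ t < H, ∀ s a, 0 < π t s a)
    (hπsum : ∀ t < H, ∀ s, ∑ a : A, π t s a = 1)
    (ν : ℕ → S → ℝ) (hνH : ∀ s, ν H s = 0)
    (r : ℕ → S → A → ℝ)
    (hr : ∀ t < H, ∀ s a,
      r t s a = Real.log (π t s a)
        - γ * (∑ s' : S, T s a s' * ν (t + 1) s') + ν t s) :
    (∀ t < H, ∀ s a, softQ T γ H r t s a = Real.log (π t s a) + ν t s) ∧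
    (∀ t < H, ∀ s, softV T γ H r t s = ν t s) ∧
    (∀ t < H, ∀ s a, softPolicy T γ H r t s a = π t s a) := by
  have hsum (t : ℕ) (ht : t < H) (s : S) :
      ∑ a : A, Real.exp (Real.log (π t s a) + ν t s) = Real.exp (ν t s) :=
    sum_exp_log_add (hπpos t ht s) (hπsum t ht s) (ν t s)
  have hQaux (k : ℕ) (hk : k < H) (s : S) (a : A) :
      Qaux T γ H r k s a = Real.log (π (H - 1 - k) s a) + ν (H - 1 - k) s := by
    induction k generalizing s a with
    | zero =>
      have hlast : H - 1 + 1 = H := by omega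
      simp [Qaux, hr (H - 1) (by omega), hlast, hνH]
    | succ k ih =>
      have hnext : H - 1 - (k + 1) + 1 = H - 1 - k := by omega
      simp only [Qaux, ih (by omega), hsum (H - 1 - k) (by omega), Real.log_exp,
        hr (H - 1 - (k + 1)) (by omega), hnext]
      ring
  have hQ (t : ℕ) (ht : t < H) (s : S) (a : A) :
      softQ T γ H r t s a = Real.log (π t s a) + ν t s := by
    have hrev : H - 1 - (H - 1 - t) = t := by omega
    rw [softQ, hQaux _ (by omega), hrev]
  refine ⟨hQ, fun t ht s => ?_, fun t ht s a => ?_⟩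
  · simp only [softV, hQ t ht, hsum t ht, Real.log_exp]
  · simp only [softPolicy, hQ t ht, hsum t ht]
    rw [Real.exp_add, Real.exp_log (hπpos t ht s a), mul_div_cancel_right₀ _ (Real.exp_ne_zero _)]
end

section
/- Let π be a positive policy, and let ν : {0,…,H} × S → ℝ satisfy ν_H(s) = 0 for all s ∈ S. If r' is any time-varying reward whose soft-optimal policy equals π and whose soft value functions satisfy V_t(s) = ν_t(s) for all 0 ≤ t ≤ H−1 and all s ∈ S, then necessarily r'_t(s,a) = log π_t(a|s) − γ · Σ_{s'∈S} T(s'|s,a) ν_{t+1}(s') + ν_t(s) for all t ∈ {0,…,H−1}, s ∈ S, a ∈ A. (Uniqueness part of Lemma 1: this is the only reward for which π is soft-optimal with value functions ν.) -/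
theorem softQ_eq_log_softPolicy_add_softV {S A : Type*} [Fintype S] [Fintype A]
    (T : S → A → S → ℝ) (γ : ℝ) (H : ℕ) (r : ℕ → S → A → ℝ) (t : ℕ) (s : S) (a : A) :
    softQ T γ H r t s a = Real.log (softPolicy T γ H r t s a) + softV T γ H r t s := by
  have hsum : 0 < ∑ a' : A, Real.exp (softQ T γ H r t s a') :=
    Finset.sum_pos (fun _ _ => Real.exp_pos _) ⟨a, Finset.mem_univ a⟩
  rw [softPolicy, softV, Real.log_div (Real.exp_pos _).ne' hsum.ne', Real.log_exp]
  ring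

theorem softQ_last {S A : Type*} [Fintype S] [Fintype A]
    (T : S → A → S → ℝ) (γ : ℝ) (H : ℕ) (r : ℕ → S → A → ℝ) (s : S) (a : A) :
    softQ T γ H r (H - 1) s a = r (H - 1) s a := by
  rw [softQ, Nat.sub_self, Qaux]

theorem softQ_of_succ_lt {S A : Type*} [Fintype S] [Fintype A]
    (T : S → A → S → ℝ) (γ : ℝ) {H : ℕ} (r : ℕ → S → A → ℝ) {t : ℕ} (ht : t + 1 < H)
    (s : S) (a : A) :
    softQ T γ H r t s a =
      r t s a + γ * ∑ s' : S, T s a s' * softV T γ H r (t + 1) s' := by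
  have hk : H - 1 - t = (H - 1 - (t + 1)) + 1 := by omega
  have hr : H - 1 - ((H - 1 - (t + 1)) + 1) = t := by omega
  simp only [softV, softQ]
  rw [hk, Qaux, hr]

/-- uniqueness part of Lemma 1: if the soft-optimal policy of `r'`
equals `π` and its soft value functions equal `ν` on `{0,…,H−1}`, with `ν_H ≡ 0`,
then `r'_t(s,a) = log π_t(a|s) − γ Σ_{s'} T(s'|s,a) ν_{t+1}(s') + ν_t(s)`. -/
theorem stmt1 {S A : Type*} [Fintype S] [Fintype A] [Nonempty S] [Nonempty A]
    (T : S → A → S → ℝ) (γ : ℝ) (H : ℕ)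
    (hT : ∀ s a s', 0 ≤ T s a s') (hTsum : ∀ s a, ∑ s' : S, T s a s' = 1)
    (hγ0 : 0 ≤ γ) (hγ1 : γ ≤ 1) (hH : 1 ≤ H)
    (π : ℕ → S → A → ℝ)
    (hπpos : ∀ t < H, ∀ s a, 0 < π t s a)
    (hπsum : ∀ t < H, ∀ s, ∑ a : A, π t s a = 1)
    (ν : ℕ → S → ℝ) (hνH : ∀ s, ν H s = 0)
    (r' : ℕ → S → A → ℝ)
    (hind : ∀ t < H, ∀ s a, softPolicy T γ H r' t s a = π t s a)
    (hval : ∀ t < H, ∀ s, softV T γ H r' t s = ν t s) :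
    ∀ t < H, ∀ s a,
      r' t s a = Real.log (π t s a)
        - γ * (∑ s' : S, T s a s' * ν (t + 1) s') + ν t s := by
  intro t ht s a
  have hQ := softQ_eq_log_softPolicy_add_softV T γ H r' t s a
  rw [hind t ht, hval t ht] at hQ
  rcases Nat.lt_or_ge (t + 1) H with hlt | hge
  · rw [softQ_of_succ_lt T γ r' hlt] at hQ
    simp only [hval (t + 1) hlt] at hQ
    linarith
  · obtain rfl : t = H - 1 := by omega
    rw [softQ_last] at hQ
    simp [Nat.sub_add_cancel hH, hνH, hQ]
end

section
/- Let π be a positive policy. The map sending ν to the reward r defined by r_t(s,a) = log π_t(a|s) − γ · Σ_{s'∈S} T(s'|s,a) ν_{t+1}(s') + ν_t(s) is injective on the set of ν : {0,…,H} × S → ℝ with ν_H ≡ 0: if ν and ν' both vanish at time H and produce the same reward (r_t(s,a) = r'_t(s,a) for all t, s, a), then ν_t(s) = ν'_t(s) for all t ≤ H and s ∈ S. Consequently, the set of time-varying rewards whose soft-optimal policy equals π is infinite. -/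
/-- The reward `r_t(s,a) = log π_t(a|s) − γ Σ_{s'} T(s'|s,a) ν_{t+1}(s') + ν_t(s)`. -/
noncomputable def shapedReward {S A : Type*} [Fintype S]
    (T : S → A → S → ℝ) (γ : ℝ) (π : ℕ → S → A → ℝ) (ν : ℕ → S → ℝ)
    (t : ℕ) (s : S) (a : A) : ℝ :=
  Real.log (π t s a) - γ * (∑ s' : S, T s a s' * ν (t + 1) s') + ν t s

theorem Qaux_shapedReward {S A : Type*} [Fintype S] [Fintype A]
    (T : S → A → S → ℝ) (γ : ℝ) {H : ℕ} {π : ℕ → S → A → ℝ}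
    (hπpos : ∀ t < H, ∀ s a, 0 < π t s a)
    (hπsum : ∀ t < H, ∀ s, ∑ a : A, π t s a = 1)
    {ν : ℕ → S → ℝ} (hν : ∀ s, ν H s = 0) {k : ℕ} (hk : k < H) (s : S) (a : A) :
    Qaux T γ H (shapedReward T γ π ν) k s a =
      Real.log (π (H - 1 - k) s a) + ν (H - 1 - k) s := by
  induction k generalizing s a with
  | zero =>
    have hH : H - 1 + 1 = H := by omega
    simp [Qaux, shapedReward, hH, hν]
  | succ k ih =>
    have hlt : H - 1 - k < H := by omega
    have hstep : H - 1 - (k + 1) + 1 = H - 1 - k := by omega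
    simp only [Qaux, shapedReward, hstep, ih (Nat.lt_of_succ_lt hk),
      sum_exp_log_add (hπpos _ hlt _) (hπsum _ hlt _), Real.log_exp]
    ring

theorem softPolicy_shapedReward {S A : Type*} [Fintype S] [Fintype A]
    (T : S → A → S → ℝ) (γ : ℝ) {H : ℕ} {π : ℕ → S → A → ℝ}
    (hπpos : ∀ t < H, ∀ s a, 0 < π t s a)
    (hπsum : ∀ t < H, ∀ s, ∑ a : A, π t s a = 1)
    {ν : ℕ → S → ℝ} (hν : ∀ s, ν H s = 0) {t : ℕ} (ht : t < H) (s : S) (a : A) :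
    softPolicy T γ H (shapedReward T γ π ν) t s a = π t s a := by
  have hk : H - 1 - t < H := by omega
  have htime : H - 1 - (H - 1 - t) = t := by omega
  simp only [softPolicy, softQ, Qaux_shapedReward T γ hπpos hπsum hν hk, htime,
    sum_exp_log_add (hπpos t ht s) (hπsum t ht s)]
  rw [Real.exp_add, Real.exp_log (hπpos t ht s a), mul_div_cancel_right₀ _ (Real.exp_ne_zero _)]

theorem eq_of_shapedReward_eq {S A : Type*} [Fintype S] [Nonempty A]
    {T : S → A → S → ℝ} {γ : ℝ} {H : ℕ} {π : ℕ → S → A → ℝ} {ν ν' : ℕ → S → ℝ}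
    (hν : ∀ s, ν H s = 0) (hν' : ∀ s, ν' H s = 0)
    (h : ∀ t < H, ∀ s a, shapedReward T γ π ν t s a = shapedReward T γ π ν' t s a)
    {t : ℕ} (ht : t ≤ H) (s : S) : ν t s = ν' t s := by
  induction ht using Nat.decreasingInduction generalizing s with
  | self => rw [hν, hν']
  | of_succ t ht ih =>
    have h_eq := h t ht s (Classical.arbitrary A)
    simp only [shapedReward, ih] at h_eq
    exact add_left_cancel h_eq

/-- the map `ν ↦ r` with
`r_t(s,a) = log π_t(a|s) − γ Σ_{s'} T(s'|s,a) ν_{t+1}(s') + ν_t(s)` is injective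
on the set of `ν` with `ν_H ≡ 0`; consequently the set of time-varying rewards
(on `{0,…,H−1}`) whose soft-optimal policy equals `π` is infinite. -/
theorem stmt4 {S A : Type*} [Fintype S] [Fintype A] [Nonempty S] [Nonempty A]
    (T : S → A → S → ℝ) (γ : ℝ) (H : ℕ)
    (hT : ∀ s a s', 0 ≤ T s a s') (hTsum : ∀ s a, ∑ s' : S, T s a s' = 1)
    (hγ0 : 0 ≤ γ) (hγ1 : γ ≤ 1) (hH : 1 ≤ H)
    (π : ℕ → S → A → ℝ)
    (hπpos : ∀ t < H, ∀ s a, 0 < π t s a)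
    (hπsum : ∀ t < H, ∀ s, ∑ a : A, π t s a = 1) :
    (∀ ν ν' : ℕ → S → ℝ, (∀ s, ν H s = 0) → (∀ s, ν' H s = 0) →
      (∀ t < H, ∀ s a,
        Real.log (π t s a) - γ * (∑ s' : S, T s a s' * ν (t + 1) s') + ν t s =
        Real.log (π t s a) - γ * (∑ s' : S, T s a s' * ν' (t + 1) s') + ν' t s) →
      ∀ t ≤ H, ∀ s, ν t s = ν' t s) ∧
    Set.Infinite
      ((fun r : ℕ → S → A → ℝ => fun t : Fin H => r t) ''
        {r | ∀ t < H, ∀ s a, softPolicy T γ H r t s a = π t s a}) := by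
  refine ⟨fun ν ν' hν hν' h t ht s => eq_of_shapedReward_eq (T := T) hν hν' h ht s, ?_⟩
  let ν : ℝ → ℕ → S → ℝ := fun c t _ => if t = H then 0 else c
  have hν : ∀ c s, ν c H s = 0 := fun c s => if_pos rfl
  refine Set.infinite_of_injective_forall_mem
    (f := fun (c : ℝ) (t : Fin H) => shapedReward T γ π (ν c) t) (fun c c' hcc' => ?_)
    fun c => ⟨shapedReward T γ π (ν c),
      fun t ht s a => softPolicy_shapedReward T γ hπpos hπsum (hν c) ht s a, rfl⟩
  have h_zero : ν c 0 (Classical.arbitrary S) = ν c' 0 (Classical.arbitrary S) :=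
    eq_of_shapedReward_eq (T := T) (γ := γ) (π := π) (hν c) (hν c')
      (fun t ht s a => congrFun (congrFun (congrFun hcc' ⟨t, ht⟩) s) a) (Nat.zero_le H)
      (Classical.arbitrary S)
  have hH0 : 0 ≠ H := by omega
  simpa [ν, hH0] using h_zero
end

section
/- Let π be a positive policy and 0 ≤ i < j ≤ H. If there exists some ν_o : S → ℝ for which a time-invariant certificate on [i,j) with terminal value ν_o exists, then for every ν'_o : S → ℝ there exists a time-invariant certificate on [i,j) with terminal value ν'_o. Equivalently, the set of time-invariant certificates on [i,j) with terminal value ν_o is empty for some ν_o if and only if it is empty for all ν_o. (Lemma 2 of the paper.) -/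
/-- A time-invariant certificate on `[i,j)` with terminal value `νo` for the
policy `π`: a pair `(r, ν)` with `r : S × A → ℝ` and `ν` defined on
`{i,…,j} × S` such that `ν_j = νo` and, for all `i ≤ t < j`, `s`, `a`,
`r(s,a) = log π_t(a|s) − γ Σ_{s'} T(s'|s,a) ν_{t+1}(s') + ν_t(s)`. -/
def IsCert {S A : Type*} [Fintype S] (T : S → A → S → ℝ) (γ : ℝ)
    (π : ℕ → S → A → ℝ) (i j : ℕ) (νo : S → ℝ)
    (r : S → A → ℝ) (ν : ℕ → S → ℝ) : Prop :=
  (∀ s, ν j s = νo s) ∧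
  ∀ t, i ≤ t → t < j → ∀ s a,
    r s a = Real.log (π t s a)
      - γ * (∑ s' : S, T s a s' * ν (t + 1) s') + ν t s

/-- The interval `[i,j)` is feasible for `π` if a time-invariant certificate on
`[i,j)` exists with some terminal value. -/
def Feasible {S A : Type*} [Fintype S] (T : S → A → S → ℝ) (γ : ℝ)
    (π : ℕ → S → A → ℝ) (i j : ℕ) : Prop :=
  ∃ (νo : S → ℝ) (r : S → A → ℝ) (ν : ℕ → S → ℝ), IsCert T γ π i j νo r ν

/-- Adding a time-independent shift `δ` to the values of a certificate gives a certificate, whose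
reward is shaped by the potential `δ`. -/
theorem IsCert.add_potential {S A : Type*} [Fintype S] {T : S → A → S → ℝ} {γ : ℝ}
    {π : ℕ → S → A → ℝ} {i j : ℕ} {νo : S → ℝ} {r : S → A → ℝ} {ν : ℕ → S → ℝ}
    (h : IsCert T γ π i j νo r ν) (δ : S → ℝ) :
    IsCert T γ π i j (fun s => νo s + δ s)
      (fun s a => r s a - γ * (∑ s' : S, T s a s' * δ s') + δ s)
      (fun t s => ν t s + δ s) := by
  refine ⟨fun s => by simp only [h.1 s], fun t hi hj s a => ?_⟩
  simp only [h.2 t hi hj s a, mul_add, Finset.sum_add_distrib]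
  ring

/-- If a certificate exists for some terminal value, one exists for every terminal value. -/
theorem IsCert.exists_terminal {S A : Type*} [Fintype S] {T : S → A → S → ℝ} {γ : ℝ}
    {π : ℕ → S → A → ℝ} {i j : ℕ} {νo : S → ℝ} {r : S → A → ℝ} {ν : ℕ → S → ℝ}
    (h : IsCert T γ π i j νo r ν) (νo' : S → ℝ) :
    ∃ (r' : S → A → ℝ) (ν' : ℕ → S → ℝ), IsCert T γ π i j νo' r' ν' := by
  have h' := h.add_potential (fun s => νo' s - νo s)
  simp only [add_sub_cancel] at h'
  exact ⟨_, _, h'⟩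

/-- Lemma 2: if a time-invariant certificate on `[i,j)` exists for
some terminal value, then one exists for every terminal value; equivalently,
the certificate set is empty for some terminal value iff it is empty for all. -/
theorem stmt6 {S A : Type*} [Fintype S] [Fintype A] [Nonempty S] [Nonempty A]
    (T : S → A → S → ℝ) (γ : ℝ) (H : ℕ)
    (hT : ∀ s a s', 0 ≤ T s a s') (hTsum : ∀ s a, ∑ s' : S, T s a s' = 1)
    (hγ0 : 0 ≤ γ) (hγ1 : γ ≤ 1) (hH : 1 ≤ H)
    (π : ℕ → S → A → ℝ)
    (hπpos : ∀ t < H, ∀ s a, 0 < π t s a)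
    (hπsum : ∀ t < H, ∀ s, ∑ a : A, π t s a = 1)
    (i j : ℕ) (hij : i < j) (hjH : j ≤ H) :
    ((∃ (νo : S → ℝ) (r : S → A → ℝ) (ν : ℕ → S → ℝ), IsCert T γ π i j νo r ν) →
      ∀ νo' : S → ℝ, ∃ (r : S → A → ℝ) (ν : ℕ → S → ℝ), IsCert T γ π i j νo' r ν) ∧
    ((∃ νo : S → ℝ, ¬ ∃ (r : S → A → ℝ) (ν : ℕ → S → ℝ), IsCert T γ π i j νo r ν) ↔
      ∀ νo : S → ℝ, ¬ ∃ (r : S → A → ℝ) (ν : ℕ → S → ℝ), IsCert T γ π i j νo r ν) := by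
  refine ⟨fun ⟨_, _, _, h⟩ => h.exists_terminal, ?_, fun h => ⟨fun _ => 0, h _⟩⟩
  rintro ⟨νo, hνo⟩ _ ⟨_, _, h⟩
  exact hνo (h.exists_terminal νo)
end

section
/- Let π be a positive policy and let g be its greedy switch sequence. Let k ≥ 1 and s : {0,…,k} → ℕ satisfy s_0 = H, s_{i+1} < s_i for all i < k, and: the interval [s_{i+1}, s_i) is feasible for π for every i < k. Then g(i) ≤ s(i) for all 0 ≤ i ≤ k. (Lemma 3 of the paper: the greedy switch times are pointwise no later, counted backward from the horizon, than those of any feasible switch-time sequence.) -/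
/-- The greedy switch sequence of `π`: `g 0 = H`; if `g i = 0` then `g (i+1) = 0`,
otherwise `g (i+1)` is the least `t` such that `[t, g i)` is feasible for `π`. -/
noncomputable def greedy {S A : Type*} [Fintype S] (T : S → A → S → ℝ) (γ : ℝ)
    (π : ℕ → S → A → ℝ) (H : ℕ) : ℕ → ℕ
  | 0 => H
  | (i + 1) =>
      if greedy T γ π H i = 0 then 0
      else sInf {t | Feasible T γ π t (greedy T γ π H i)}

/-- Restricting a certificate to an initial segment `[i,j')` of `[i,j)` keeps it valid. -/
theorem Feasible.mono_right {S A : Type*} [Fintype S] {T : S → A → S → ℝ} {γ : ℝ}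
    {π : ℕ → S → A → ℝ} {i j j' : ℕ} (h : Feasible T γ π i j) (hj : j' ≤ j) :
    Feasible T γ π i j' := by
  obtain ⟨_, r, ν, -, hc⟩ := h
  exact ⟨ν j', r, ν, fun _ => rfl, fun t hit htj => hc t hit (htj.trans_le hj)⟩

theorem greedy_succ_le_of_feasible {S A : Type*} [Fintype S] {T : S → A → S → ℝ} {γ : ℝ}
    {π : ℕ → S → A → ℝ} {H i t : ℕ} (h : Feasible T γ π t (greedy T γ π H i)) :
    greedy T γ π H (i + 1) ≤ t := by
  rw [greedy]
  split_ifs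
  · exact Nat.zero_le t
  · exact Nat.sInf_le h

/-- Lemma 3: the greedy switch times are pointwise no later
(counted backward from the horizon) than those of any feasible switch sequence. -/
theorem stmt9 {S A : Type*} [Fintype S] [Fintype A] [Nonempty S] [Nonempty A]
    (T : S → A → S → ℝ) (γ : ℝ) (H : ℕ)
    (hT : ∀ s a s', 0 ≤ T s a s') (hTsum : ∀ s a, ∑ s' : S, T s a s' = 1)
    (hγ0 : 0 ≤ γ) (hγ1 : γ ≤ 1) (hH : 1 ≤ H)
    (π : ℕ → S → A → ℝ)
    (hπpos : ∀ t < H, ∀ s a, 0 < π t s a)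
    (hπsum : ∀ t < H, ∀ s, ∑ a : A, π t s a = 1)
    (k : ℕ) (hk : 1 ≤ k) (s : ℕ → ℕ)
    (hs0 : s 0 = H)
    (hdec : ∀ i < k, s (i + 1) < s i)
    (hfeas : ∀ i < k, Feasible T γ π (s (i + 1)) (s i)) :
    ∀ i ≤ k, greedy T γ π H i ≤ s i := by
  intro i
  induction i with
  | zero => exact fun _ => hs0.ge
  | succ i ih =>
    intro hi
    have hle := ih (Nat.le_of_succ_le hi)
    exact greedy_succ_le_of_feasible ((hfeas i hi).mono_right hle)
end

section
/- Let A be a nonempty finite set, p a strictly positive probability mass function on A, n ≥ 1, δ ∈ (0,1), and ε = sqrt((1/(2n)) · log(2/(1−δ))). Fix a ∈ A and α ∈ ℝ with ε < α ≤ p(a). Then, with respect to the product measure of n i.i.d. samples from p, the probability of the event { |log p̂(a) − log p(a)| ≤ ε/(α − ε) } is at least δ, where p̂(a) = (1/n) Σ_{i=1}^n 1[a_i = a] is the empirical frequency of a among the samples a_1, …, a_n. (Lemma 4 of the paper.) -/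
open MeasureTheory ProbabilityTheory

/-- **Two-sided Hoeffding inequality** for the sum of `n` i.i.d. copies of a random variable with
values in `[0, 1]`. -/
theorem measureReal_pi_abs_sum_sub_integral_ge_le {Ω : Type*} [MeasurableSpace Ω]
    (μ : Measure Ω) [IsProbabilityMeasure μ] {f : Ω → ℝ} (hf : Measurable f)
    (hf01 : ∀ x, f x ∈ Set.Icc (0 : ℝ) 1) (n : ℕ) {t : ℝ} (ht : 0 ≤ t) :
    (Measure.pi fun _ : Fin n => μ).real {ω | t ≤ |∑ i, (f (ω i) - ∫ x, f x ∂μ)|}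
      ≤ 2 * Real.exp (-2 * t ^ 2 / n) := by
  have hsub := hasSubgaussianMGF_of_mem_Icc hf.aemeasurable (ae_of_all μ hf01)
  have hsub_eval (i : Fin n) : HasSubgaussianMGF (fun ω : Fin n → Ω => f (ω i) - ∫ x, f x ∂μ)
      ((‖(1 : ℝ) - 0‖₊ / 2) ^ 2) (Measure.pi fun _ : Fin n => μ) := by
    have hmap : (Measure.pi fun _ : Fin n => μ).map (fun ω => ω i) = μ :=
      (measurePreserving_eval (fun _ : Fin n => μ) i).map_eq
    exact HasSubgaussianMGF.of_map (X := fun x => f x - ∫ x, f x ∂μ)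
      (measurable_pi_apply i).aemeasurable (by rwa [hmap])
  have hsum := HasSubgaussianMGF.sum_of_iIndepFun (s := Finset.univ)
    (iIndepFun_pi (μ := fun _ : Fin n => μ) (X := fun _ x => f x - ∫ x, f x ∂μ)
      fun _ => (hf.sub_const _).aemeasurable) fun i _ => hsub_eval i
  have hexp : Real.exp (-t ^ 2 / (2 * (∑ _i : Fin n, (‖(1 : ℝ) - 0‖₊ / 2) ^ 2 : NNReal)))
      = Real.exp (-2 * t ^ 2 / n) := by
    rcases eq_or_ne (n : ℝ) 0 with h | h
    · simp [h]
    · congr 1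
      simp
      field_simp
  have hupper := hsum.measure_ge_le ht
  have hlower := hsum.neg.measure_ge_le ht
  rw [hexp] at hupper hlower
  rw [two_mul]
  refine le_trans ?_ ((measureReal_union_le _ _).trans (add_le_add hupper hlower))
  exact measureReal_mono fun ω hω => by simpa [le_abs] using hω

/-- If `x` is within `ε` of `y` and `ε < α ≤ y`, then `log x` is within `ε / (α - ε)` of
`log y`. -/
theorem Real.abs_log_sub_log_le_div {x y ε α : ℝ} (hεα : ε < α) (hαy : α ≤ y)
    (hxy : |x - y| ≤ ε) : |Real.log x - Real.log y| ≤ ε / (α - ε) := by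
  have hε : 0 ≤ ε := (abs_nonneg _).trans hxy
  obtain ⟨hlo, hhi⟩ := abs_le.1 hxy
  have hx : 0 < x := by linarith
  have hy : 0 < y := by linarith
  have hα : 0 < α - ε := by linarith
  rw [abs_sub_le_iff, ← Real.log_div hx.ne' hy.ne', ← Real.log_div hy.ne' hx.ne']
  constructor
  · calc Real.log (x / y) ≤ x / y - 1 := Real.log_le_sub_one_of_pos (by positivity)
      _ = (x - y) / y := by field_simp
      _ ≤ ε / (α - ε) := by gcongr; linarith
  · calc Real.log (y / x) ≤ y / x - 1 := Real.log_le_sub_one_of_pos (by positivity)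
      _ = (y - x) / x := by field_simp
      _ ≤ ε / (α - ε) := by gcongr <;> linarith

/-- Lemma 4: for `n` i.i.d. samples from a strictly positive pmf
`p` on the nonempty finite set `A`, a fixed `a ∈ A`, and
`ε = sqrt((1/(2n)) log(2/(1−δ)))` with `ε < α ≤ p a`, the product measure of the
event `{ |log p̂(a) − log p(a)| ≤ ε/(α − ε) }` is at least `δ`, where
`p̂(a) = (1/n) Σ_i 1[aᵢ = a]`. -/
theorem stmt12 {A : Type*} [Fintype A] [Nonempty A] [DecidableEq A]
    [MeasurableSpace A] [MeasurableSingletonClass A]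
    (p : A → ℝ) (hp : ∀ a, 0 < p a) (hpsum : ∑ a : A, p a = 1)
    (n : ℕ) (hn : 1 ≤ n) (δ : ℝ) (hδ0 : 0 < δ) (hδ1 : δ < 1)
    (ε : ℝ) (hε : ε = Real.sqrt ((1 / (2 * (n : ℝ))) * Real.log (2 / (1 - δ))))
    (a : A) (α : ℝ) (hεα : ε < α) (hαp : α ≤ p a) :
    ENNReal.ofReal δ ≤
      Measure.pi (fun _ : Fin n => ∑ b : A, ENNReal.ofReal (p b) • Measure.dirac b)
        {ω : Fin n → A |
          |Real.log ((1 / (n : ℝ)) * ∑ i : Fin n, if ω i = a then (1 : ℝ) else 0)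
            - Real.log (p a)| ≤ ε / (α - ε)} := by
  set μ : Measure A := ∑ b : A, ENNReal.ofReal (p b) • Measure.dirac b with hμ
  have hprob : IsProbabilityMeasure μ := ⟨by
    simp [hμ, ← ENNReal.ofReal_sum_of_nonneg fun b _ => (hp b).le, hpsum]⟩
  have hmean : ∫ x, (if x = a then (1 : ℝ) else 0) ∂μ = p a := by
    rw [hμ, integral_finsetSum_measure
      fun _ _ => Integrable.of_finite.smul_measure ENNReal.ofReal_ne_top]
    simp [(hp _).le]
  have hn0 : (0 : ℝ) < n := by exact_mod_cast hn
  have hδ : 0 < 1 - δ := by linarith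
  have hlog : 0 < Real.log (2 / (1 - δ)) :=
    Real.log_pos (by rw [one_lt_div hδ]; linarith)
  have hε0 : 0 ≤ ε := hε ▸ Real.sqrt_nonneg _
  have hεsq : ε ^ 2 = 1 / (2 * (n : ℝ)) * Real.log (2 / (1 - δ)) := by
    rw [hε, Real.sq_sqrt (by positivity)]
  have hexp : 2 * Real.exp (-2 * (n * ε) ^ 2 / n) = 1 - δ := by
    have : -2 * (n * ε) ^ 2 / n = -Real.log (2 / (1 - δ)) := by
      rw [mul_pow, hεsq]
      field_simp
    rw [this, Real.exp_neg, Real.exp_log (by positivity)]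
    field_simp
  have htail := measureReal_pi_abs_sum_sub_integral_ge_le μ
    (f := fun x => if x = a then (1 : ℝ) else 0) (measurable_of_finite _)
    (fun x => by split_ifs <;> simp) n (t := n * ε) (by positivity)
  rw [hexp, hmean] at htail
  set bad : Set (Fin n → A) :=
    {ω | n * ε ≤ |∑ i, ((if ω i = a then (1 : ℝ) else 0) - p a)|}
  have hgood : δ ≤ (Measure.pi fun _ : Fin n => μ).real badᶜ := by
    rw [probReal_compl_eq_one_sub (Set.toFinite bad).measurableSet]
    linarith
  refine (ENNReal.ofReal_le_ofReal hgood).trans ?_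
  rw [ofReal_measureReal]
  refine measure_mono fun ω hω => Real.abs_log_sub_log_le_div hεα hαp ?_
  have hdev : |∑ i, ((if ω i = a then (1 : ℝ) else 0) - p a)| < n * ε := not_le.1 hω
  have hscale : 1 / (n : ℝ) * (∑ i, if ω i = a then (1 : ℝ) else 0) - p a
      = (∑ i, ((if ω i = a then (1 : ℝ) else 0) - p a)) / n := by
    rw [Finset.sum_sub_distrib]
    simp only [Finset.sum_const, Finset.card_univ, Fintype.card_fin, nsmul_eq_mul]
    field_simp
  rw [hscale, abs_div, abs_of_pos hn0, div_le_iff₀ hn0, mul_comm]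
  exact hdev.le
end
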